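/- Define the rational sequence B_n by B_0 = 0 and, for n ≥ 1, B_n = ∑_{ℓ=0}^n (binom(n,ℓ))² (binom(n+ℓ,ℓ))² · ( ∑_{m=1}^n 1/m³ − ∑_{m=1}^ℓ (−1)^m / (2 m³ binom(n,m) binom(n+m,m)) ). Then B_1 = 6, and for every integer n ≥ 1, (n+1)³·B_{n+1} + n³·B_{n−1} = (34n³ + 51n² + 27n + 5)·B_n. -/

import Mathlib

/-- The second Apéry sequence
`B_n = ∑_{ℓ=0}^n binom(n,ℓ)² binom(n+ℓ,ℓ)² (∑_{m=1}^n 1/m³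
        - ∑_{m=1}^ℓ (-1)^m /(2m³ binom(n,m) binom(n+m,m)))` (with `B_0 = 0`). -/
noncomputable def aperyB (n : ℕ) : ℚ :=
  ∑ ℓ ∈ Finset.range (n + 1),
    ((n.choose ℓ : ℚ)) ^ 2 * (((n + ℓ).choose ℓ : ℚ)) ^ 2 *
      ((∑ m ∈ Finset.Icc 1 n, (1 : ℚ) / (m : ℚ) ^ 3) -
        ∑ m ∈ Finset.Icc 1 ℓ,
          (-1 : ℚ) ^ m / (2 * (m : ℚ) ^ 3 * (n.choose m : ℚ) * ((n + m).choose m : ℚ)))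

/-- The product `binom(n,k) binom(n+k,k)`. -/
def apT (n k : ℕ) : ℚ := (n.choose k : ℚ) * ((n + k).choose k : ℚ)

/-- The inner coefficient `c_{n,k}`. -/
def apC (n k : ℕ) : ℚ :=
  (∑ m ∈ Finset.Icc 1 n, (1 : ℚ) / (m : ℚ) ^ 3) -
    ∑ m ∈ Finset.Icc 1 k, (-1 : ℚ) ^ m / (2 * (m : ℚ) ^ 3 * apT n m)

lemma aperyB_eq (n : ℕ) :
    aperyB n = ∑ k ∈ Finset.range (n + 1), apT n k ^ 2 * apC n k := by
  unfold aperyB apC apT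
  refine Finset.sum_congr rfl fun k _ => ?_
  simp only [mul_assoc, mul_pow]

lemma apT_zero (n : ℕ) : apT n 0 = 1 := by simp [apT]

lemma apT_pos {n k : ℕ} (h : k ≤ n) : 0 < apT n k := by
  unfold apT
  have h1 := Nat.choose_pos h
  have h2 := Nat.choose_pos (Nat.le_add_left k n)
  positivity

lemma apT_gt {n k : ℕ} (h : n < k) : apT n k = 0 := by
  simp [apT, Nat.choose_eq_zero_of_lt h]

/-- Step in `k`. -/
lemma apT_k (n k : ℕ) :
    ((k : ℚ) + 1) ^ 2 * apT n (k + 1) = ((n : ℚ) - k) * (n + k + 1) * apT n k := by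
  rcases lt_or_ge n k with h | h
  · rw [apT_gt h, apT_gt (by omega)]; ring
  have h1 : ((n.choose (k + 1) : ℕ) : ℚ) * (k + 1) = n.choose k * ((n : ℚ) - k) := by
    have := Nat.choose_succ_right_eq n k
    rw [← Nat.cast_sub h]
    exact_mod_cast this
  have h2 : ((n : ℚ) + k + 1) * ((n + k).choose k : ℚ)
      = ((n + (k + 1)).choose (k + 1) : ℚ) * (k + 1) := by
    have := Nat.add_one_mul_choose_eq (n + k) k
    rw [← add_assoc]
    exact_mod_cast this
  unfold apT
  linear_combination (((n + (k + 1)).choose (k + 1) : ℚ) * (k + 1)) * h1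
    - (n.choose k * ((n : ℚ) - k)) * h2

/-- Step in `n`. -/
lemma apT_n (n k : ℕ) :
    ((n : ℚ) + 1 - k) * apT (n + 1) k = (n + 1 + k) * apT n k := by
  induction k with
  | zero => simp [apT_zero]
  | succ k ih =>
    have a := apT_k n k
    have b := apT_k (n + 1) k
    push_cast at *
    have hk : ((k : ℚ) + 1) ^ 2 ≠ 0 := by positivity
    apply mul_left_cancel₀ hk
    linear_combination ((n : ℚ) + 1 - (k + 1)) * b - ((n : ℚ) + 1 + (k + 1)) * a
      + ((n : ℚ) - k) * (n + k + 2) * ih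

lemma apC_k (n k : ℕ) :
    apC n (k + 1) = apC n k - (-1) ^ (k + 1) / (2 * ((k : ℚ) + 1) ^ 3 * apT n (k + 1)) := by
  unfold apC
  rw [Finset.sum_Icc_succ_top (by omega : 1 ≤ k + 1)]
  push_cast
  ring

lemma apC_n (n k : ℕ) (h : k ≤ n) :
    apC (n + 1) k = apC n k + (-1) ^ k / (apT n k * (n + 1 + k) * ((n : ℚ) + 1) ^ 2) := by
  induction k with
  | zero =>
    unfold apC
    rw [Finset.sum_Icc_succ_top (by omega : 1 ≤ n + 1)]
    simp [apT_zero]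
    field_simp
  | succ k ih =>
    rw [apC_k, apC_k, ih (by omega)]
    have hT := apT_pos (show k ≤ n by omega)
    have hnk : (0 : ℚ) < (n : ℚ) - k := by
      have : ((k + 1 : ℕ) : ℚ) ≤ n := by exact_mod_cast h
      push_cast at this; linarith
    have a : apT n (k + 1) = ((n : ℚ) - k) * (n + k + 1) * apT n k / ((k : ℚ) + 1) ^ 2 := by
      rw [← apT_k]; field_simp
    have b : apT (n + 1) (k + 1) = ((n : ℚ) + k + 2) * (n + k + 1) * apT n k / ((k : ℚ) + 1) ^ 2 := by
      have := apT_n n (k + 1)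
      rw [a] at this
      push_cast at this
      rw [eq_div_iff (by positivity)]
      apply mul_left_cancel₀ hnk.ne'
      field_simp at this
      linear_combination this
    rw [a, b, pow_succ (-1 : ℚ) k]
    push_cast
    generalize apT n k = T at *
    generalize (-1 : ℚ) ^ k = e
    obtain ⟨j, rfl⟩ := Nat.exists_eq_add_of_le h
    push_cast
    have e1 : (k : ℚ) + 1 + j - k = j + 1 := by ring
    rw [e1]
    field_simp
    ring

/-- Zeilberger-type certificate. -/
def apA (n k : ℕ) : ℚ :=
  4 * (2 * (n : ℚ) + 1) * (k * (2 * k + 1) - (2 * n + 1) ^ 2) * apT n k ^ 2 * apC n k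
    - 5 * (2 * n + 1) * (-1) ^ k * k / (n * (n + 1)) * apT n k

lemma apA_zero (m : ℕ) :
    ((m : ℚ) + 2) ^ 3 * (apT (m + 2) 0 ^ 2 * apC (m + 2) 0)
      + ((m : ℚ) + 1) ^ 3 * (apT m 0 ^ 2 * apC m 0)
      - (34 * ((m : ℚ) + 1) ^ 3 + 51 * ((m : ℚ) + 1) ^ 2 + 27 * ((m : ℚ) + 1) + 5)
        * (apT (m + 1) 0 ^ 2 * apC (m + 1) 0) = apA (m + 1) 0 := by
  unfold apA
  rw [apC_n (m + 1) 0 (by omega), apC_n m 0 (by omega)]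
  simp only [apT_zero]
  push_cast
  field_simp
  ring

lemma apA_step (m k : ℕ) (h : k ≤ m) :
    ((m : ℚ) + 2) ^ 3 * (apT (m + 2) (k + 1) ^ 2 * apC (m + 2) (k + 1))
      + ((m : ℚ) + 1) ^ 3 * (apT m (k + 1) ^ 2 * apC m (k + 1))
      - (34 * ((m : ℚ) + 1) ^ 3 + 51 * ((m : ℚ) + 1) ^ 2 + 27 * ((m : ℚ) + 1) + 5)
        * (apT (m + 1) (k + 1) ^ 2 * apC (m + 1) (k + 1))
      = apA (m + 1) (k + 1) - apA (m + 1) k := by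
  obtain ⟨j, rfl⟩ := Nat.exists_eq_add_of_le h
  have hT := apT_pos (show k ≤ k + j + 1 by omega)
  have a : apT (k + j + 1) (k + 1)
      = ((j : ℚ) + 1) * (2 * k + j + 2) * apT (k + j + 1) k / ((k : ℚ) + 1) ^ 2 := by
    have := apT_k (k + j + 1) k
    push_cast at this
    field_simp
    linear_combination this
  have b : apT (k + j + 2) (k + 1)
      = (2 * (k : ℚ) + j + 3) * (2 * k + j + 2) * apT (k + j + 1) k / ((k : ℚ) + 1) ^ 2 := by
    have := apT_n (k + j + 1) (k + 1)
    rw [a] at this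
    push_cast at this
    have hj : ((j : ℚ) + 1) ≠ 0 := by positivity
    rw [eq_div_iff (by positivity)]
    apply mul_left_cancel₀ hj
    field_simp at this
    linear_combination this
  have c : apT (k + j) (k + 1)
      = (j : ℚ) * (j + 1) * apT (k + j + 1) k / ((k : ℚ) + 1) ^ 2 := by
    have := apT_n (k + j) (k + 1)
    rw [a] at this
    push_cast at this
    have hj : (2 * (k : ℚ) + j + 2) ≠ 0 := by positivity
    rw [eq_div_iff (by positivity)]
    apply mul_left_cancel₀ hj
    field_simp at this
    linear_combination -this
  -- difference in `n`, upper
  have d : apC (k + j + 2) (k + 1) = _ := apC_n (k + j + 1) (k + 1) (by omega)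
  have f : apC (k + j + 1) k = apC (k + j + 1) (k + 1)
      + (-1) ^ (k + 1) / (2 * ((k : ℚ) + 1) ^ 3 * apT (k + j + 1) (k + 1)) := by
    rw [apC_k]; ring
  -- difference in `n`, lower, multiplied by the vanishing factor
  have g : apT (k + j) (k + 1) ^ 2 * apC (k + j) (k + 1)
      = apT (k + j) (k + 1) ^ 2 * apC (k + j + 1) (k + 1)
        - apT (k + j) (k + 1) * (-1) ^ (k + 1) / ((2 * k + j + 2) * ((k : ℚ) + j + 1) ^ 2) := by
    rcases Nat.eq_zero_or_pos j with h0 | h0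
    · rw [apT_gt (show k + j < k + 1 by omega)]; simp
    · have hp := apT_pos (show k + 1 ≤ k + j by omega)
      rw [apC_n (k + j) (k + 1) (by omega)]
      push_cast
      generalize apT (k + j) (k + 1) = T at *
      have e1 : (k : ℚ) + j + 1 + (k + 1) = 2 * k + j + 2 := by ring
      rw [e1]
      field_simp
      ring
  unfold apA
  rw [g, f, d, a, b, c]
  push_cast
  rw [pow_succ (-1 : ℚ) k]
  have e1 : (k : ℚ) + j + 1 + 1 + (k + 1) = 2 * k + j + 3 := by ring
  rw [e1]
  generalize apT (k + j + 1) k = T at *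
  generalize (-1 : ℚ) ^ k = e
  generalize apC (k + j + 1) (k + 1) = C
  field_simp
  ring

lemma apA_sum (m K : ℕ) (h : K ≤ m + 1) :
    ∑ k ∈ Finset.range (K + 1),
      (((m : ℚ) + 2) ^ 3 * (apT (m + 2) k ^ 2 * apC (m + 2) k)
      + ((m : ℚ) + 1) ^ 3 * (apT m k ^ 2 * apC m k)
      - (34 * ((m : ℚ) + 1) ^ 3 + 51 * ((m : ℚ) + 1) ^ 2 + 27 * ((m : ℚ) + 1) + 5)
        * (apT (m + 1) k ^ 2 * apC (m + 1) k)) = apA (m + 1) K := by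
  induction K with
  | zero => simpa using apA_zero m
  | succ K ih =>
    rw [Finset.sum_range_succ, ih (by omega), apA_step m K (by omega)]
    ring

/-- The last term `k = n + 1`. -/
lemma apA_last (m : ℕ) :
    ((m : ℚ) + 2) ^ 3 * (apT (m + 2) (m + 2) ^ 2 * apC (m + 2) (m + 2))
      = - apA (m + 1) (m + 1) := by
  have hT := apT_pos (le_refl (m + 1))
  have a : apT (m + 2) (m + 1) = (2 * (m : ℚ) + 3) * apT (m + 1) (m + 1) := by
    have := apT_n (m + 1) (m + 1)
    push_cast at this
    linear_combination this
  have b : apT (m + 2) (m + 2)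
      = 2 * (2 * (m : ℚ) + 3) * apT (m + 1) (m + 1) / ((m : ℚ) + 2) := by
    have := apT_k (m + 2) (m + 1)
    rw [a] at this
    push_cast at this
    have h2 : ((m : ℚ) + 2) ≠ 0 := by positivity
    rw [eq_div_iff (by positivity)]
    apply mul_left_cancel₀ h2
    linear_combination this
  have c : apC (m + 2) (m + 2) = _ := apC_k (m + 2) (m + 1)
  have d : apC (m + 2) (m + 1) = _ := apC_n (m + 1) (m + 1) le_rfl
  have b' : apT (m + 2) (m + 1 + 1) = _ := b
  unfold apA
  rw [c, d, b']
  push_cast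
  rw [pow_succ (-1 : ℚ) (m + 1)]
  have e1 : (m : ℚ) + 1 + 1 + (m + 1) = 2 * m + 3 := by ring
  have e2 : (m : ℚ) + 1 + 1 = m + 2 := by ring
  rw [e1, e2]
  generalize apT (m + 1) (m + 1) = T at *
  generalize (-1 : ℚ) ^ (m + 1) = e
  generalize apC (m + 1) (m + 1) = C
  field_simp
  ring

/-- Apéry's recursion for the sequence `B_n`: `B_1 = 6` and
`(n+1)³ B_{n+1} - (34n³+51n²+27n+5) B_n + n³ B_{n-1} = 0` for `n ≥ 1`. -/
theorem aperyB_recursion :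
    aperyB 1 = 6 ∧
    ∀ n : ℕ, 1 ≤ n →
      ((n : ℚ) + 1) ^ 3 * aperyB (n + 1) + (n : ℚ) ^ 3 * aperyB (n - 1)
        = (34 * (n : ℚ) ^ 3 + 51 * (n : ℚ) ^ 2 + 27 * (n : ℚ) + 5) * aperyB n := by
  constructor
  · rw [aperyB_eq]
    norm_num [Finset.sum_range_succ, apT, apC]
  · intro n hn
    obtain ⟨m, rfl⟩ := Nat.exists_eq_add_of_le' hn
    have h := apA_sum m (m + 1) le_rfl
    have hl := apA_last m
    have h1 : aperyB (m + 1 + 1) = ∑ k ∈ Finset.range (m + 1 + 1),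
        apT (m + 2) k ^ 2 * apC (m + 2) k + apT (m + 2) (m + 2) ^ 2 * apC (m + 2) (m + 2) := by
      rw [aperyB_eq, Finset.sum_range_succ]
    have h2 : aperyB (m + 1 - 1) = ∑ k ∈ Finset.range (m + 1 + 1), apT m k ^ 2 * apC m k := by
      rw [Nat.add_sub_cancel, aperyB_eq, Finset.sum_range_succ _ (m + 1),
        apT_gt (show m < m + 1 by omega)]
      simp
    rw [h1, h2, aperyB_eq (m + 1)]
    rw [Finset.sum_sub_distrib, Finset.sum_add_distrib, ← Finset.mul_sum, ← Finset.mul_sum,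
      ← Finset.mul_sum] at h
    push_cast
    linear_combination h + hl
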